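/- arXiv:math/0411634 — 4 statements merged into one kernel-verified Lean document; each statement's English description precedes it below -/
import Mathlib

section
/- Let p ≥ 1 and let A be a symmetric invertible real p × p matrix. In 2p × 2p block form set J = diag(I_p, −I_p) and T = [[I_p, A], [I_p, −A⁻¹]]. Then T is invertible, with inverse T⁻¹ = [[(A² + I)⁻¹, A²(A² + I)⁻¹], [A(A² + I)⁻¹, −A(A² + I)⁻¹]], and det(I_{2p} − J T⁻¹ J T) = 2^{2p} · det(A²) · det(A² + I_p)⁻¹. -/
open Matrix

/-- The explicit determinant computation in the proof of Lemma 7.10 of the paper.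
Let `p ≥ 1` and let `A` be a symmetric invertible real `p × p` matrix. With
`J = diag(I, −I)` and `T = [[I, A], [I, −A⁻¹]]` in `2p × 2p` block form, `T` is
invertible, its inverse is `[[(A²+I)⁻¹, A²(A²+I)⁻¹], [A(A²+I)⁻¹, −A(A²+I)⁻¹]]`,
and `det(I − J T⁻¹ J T) = 2^{2p} det(A²) det(A²+I)⁻¹`. -/
theorem block_scattering_det (p : ℕ) (hp : 1 ≤ p)
    (A : Matrix (Fin p) (Fin p) ℝ) (hA : A.IsSymm) (hinv : IsUnit A.det)
    (J T : Matrix (Fin p ⊕ Fin p) (Fin p ⊕ Fin p) ℝ)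
    (hJ : J = Matrix.fromBlocks 1 0 0 (-1))
    (hT : T = Matrix.fromBlocks 1 A 1 (-A⁻¹)) :
    IsUnit T.det ∧
    T⁻¹ = Matrix.fromBlocks ((A ^ 2 + 1)⁻¹) (A ^ 2 * (A ^ 2 + 1)⁻¹)
      (A * (A ^ 2 + 1)⁻¹) (-(A * (A ^ 2 + 1)⁻¹)) ∧
    (1 - J * T⁻¹ * J * T).det = 2 ^ (2 * p) * (A ^ 2).det * ((A ^ 2 + 1).det)⁻¹ := by
  have hpd : (A ^ 2 + 1).PosDef := by
    have h1 : (A ^ 2).PosSemidef := by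
      have h := Matrix.posSemidef_conjTranspose_mul_self A
      rwa [Matrix.conjTranspose_eq_transpose_of_trivial, hA.eq, ← pow_two] at h
    exact Matrix.PosDef.posSemidef_add h1 Matrix.PosDef.one
  have hne : (A ^ 2 + 1).det ≠ 0 := hpd.det_pos.ne'
  have hu : IsUnit (A ^ 2 + 1).det := isUnit_iff_ne_zero.mpr hne
  obtain ⟨B, hB⟩ : ∃ B, B = (A ^ 2 + 1)⁻¹ := ⟨_, rfl⟩
  have hB1 : (A ^ 2 + 1) * B = 1 := by rw [hB]; exact Matrix.mul_nonsing_inv _ hu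
  have hB2 : B * (A ^ 2 + 1) = 1 := by rw [hB]; exact Matrix.nonsing_inv_mul _ hu
  have hA1 : A * A⁻¹ = 1 := Matrix.mul_nonsing_inv _ hinv
  have hA2 : A⁻¹ * A = 1 := Matrix.nonsing_inv_mul _ hinv
  have hcomm : B * A = A * B := by
    calc B * A = B * A * ((A ^ 2 + 1) * B) := by rw [hB1, mul_one]
      _ = (B * (A ^ 2 + 1)) * (A * B) := by noncomm_ring
      _ = A * B := by rw [hB2, one_mul]
  have hB1' : A * (A * B) + B = 1 := by rw [← hB1]; noncomm_ring
  have hA2' : ∀ X, A⁻¹ * (A * X) = X := fun X => by rw [← mul_assoc, hA2, one_mul]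
  rw [← hB]
  have hTX : T * Matrix.fromBlocks B (A ^ 2 * B) (A * B) (-(A * B)) = 1 := by
    rw [hT, Matrix.fromBlocks_multiply, ← Matrix.fromBlocks_one]
    congr 1
    · rw [one_mul, ← hB1', add_comm]
    · noncomm_ring
    · rw [neg_mul, hA2']; noncomm_ring
    · rw [neg_mul_neg, hA2', one_mul, pow_two, mul_assoc, hB1']
  have hTu : IsUnit T.det := Matrix.isUnit_det_of_right_inverse hTX
  have hTi := Matrix.inv_eq_right_inv hTX
  refine ⟨hTu, hTi, ?_⟩
  have hABi : A * (B * A⁻¹) = B := by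
    rw [← mul_assoc, ← hcomm, mul_assoc, hA1, mul_one]
  have hM : 1 - J * T⁻¹ * J * T
      = Matrix.fromBlocks ((2 : ℝ) • (A * B)) 0 0 ((2 : ℝ) • (A * B))
        * Matrix.fromBlocks A (-1) 1 A := by
    rw [hTi, hT, hJ]
    simp only [Matrix.fromBlocks_multiply]
    rw [← Matrix.fromBlocks_one, sub_eq_add_neg, Matrix.fromBlocks_neg, Matrix.fromBlocks_add]
    simp only [two_smul, pow_two, mul_assoc, one_mul, mul_one, zero_mul, mul_zero, add_zero,
      zero_add, neg_mul, mul_neg, neg_neg, add_mul, hcomm, hABi, neg_zero, neg_add_rev]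
    congr 1
    · rw [← hB1']; abel
    · rw [← hB1']; abel
  have hD : (Matrix.fromBlocks A (-1) 1 A).det = (A ^ 2 + 1).det := by
    letI := Matrix.invertibleOfIsUnitDet A hinv
    rw [Matrix.det_fromBlocks₁₁, ← Matrix.det_mul, Matrix.invOf_eq_nonsing_inv]
    congr 1
    rw [one_mul, mul_neg, mul_one, sub_neg_eq_add, mul_add, hA1, pow_two]
  have hdB : B.det = ((A ^ 2 + 1).det)⁻¹ := by
    rw [hB, Matrix.det_nonsing_inv, Ring.inverse_eq_inv']
  rw [hM, Matrix.det_mul, hD, Matrix.det_fromBlocks_zero₂₁, Matrix.det_smul, Matrix.det_mul, hdB,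
    Matrix.det_pow, Fintype.card_fin, pow_mul']
  field_simp
end

section
/- Let b₀ ∈ ℝ, ρ > 0, C > 0, and let f : [1, ∞) → ℝ be a locally integrable function with |f(t) − b₀| ≤ C t^{−ρ} for all t ≥ 1. Then lim_{λ → 0⁺} ( ∫₁^∞ t⁻¹ e^{−λt} f(t) dt + b₀ log λ ) = ∫₁^∞ t⁻¹ (f(t) − b₀) dt − b₀ γ, where γ is the Euler–Mascheroni constant. -/
open MeasureTheory Real Filter

lemma aux_log_exp :
    IntegrableOn (fun t : ℝ => Real.log t * Real.exp (-t)) (Set.Ioi 0) ∧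
    ∫ t in Set.Ioi (0:ℝ), Real.log t * Real.exp (-t) = -Real.eulerMascheroniConstant := by
  have key := mellin_hasDerivAt_of_isBigO_rpow (E := ℂ) (a := 2) (b := 0) (s := 1)
    (f := fun x : ℝ => ((Real.exp (-x) : ℝ) : ℂ)) ?_ ?_ (by norm_num) ?_ (by norm_num)
  · obtain ⟨h1, h2⟩ := key
    have e1 : ∀ t : ℝ, (t : ℂ) ^ ((1 : ℂ) - 1) • (Real.log t • ((Real.exp (-t) : ℝ) : ℂ))
        = ((Real.log t * Real.exp (-t) : ℝ) : ℂ) := by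
      intro t
      simp
    constructor
    · unfold MellinConvergent at h1
      simp only [e1] at h1
      exact h1.re
    · have h3 : HasDerivAt Complex.Gamma
          (∫ t in Set.Ioi (0:ℝ), ((Real.log t * Real.exp (-t) : ℝ) : ℂ)) ((1 : ℝ) : ℂ) := by
        rw [← Complex.GammaIntegral_eq_mellin] at h2
        unfold mellin at h2
        simp only [e1] at h2
        rw [Complex.ofReal_one]
        refine h2.congr_of_eventuallyEq ?_
        have : IsOpen {s : ℂ | 0 < s.re} := Complex.continuous_re.isOpen_preimage _ isOpen_Ioi
        filter_upwards [this.mem_nhds (by simp : (1:ℂ) ∈ {s : ℂ | 0 < s.re})] with a ha using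
          Complex.Gamma_eq_integral ha
      rw [integral_complex_ofReal] at h3
      have h4 := h3.real_of_complex
      have h5 : HasDerivAt Real.Gamma
        (∫ t in Set.Ioi (0:ℝ), Real.log t * Real.exp (-t)) 1 := by
        simpa using! h4
      exact h5.unique Real.hasDerivAt_Gamma_one
  · refine (Continuous.continuousOn ?_).locallyIntegrableOn measurableSet_Ioi
    exact Complex.continuous_ofReal.comp (Real.continuous_exp.comp continuous_neg)
  · rw [← Asymptotics.isBigO_norm_left]
    simp_rw [Complex.norm_real, Asymptotics.isBigO_norm_left]
    simpa only [neg_one_mul] using (isLittleO_exp_neg_mul_rpow_atTop zero_lt_one _).isBigO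
  · simp_rw [neg_zero, rpow_zero]
    refine Asymptotics.isBigO_const_of_tendsto (y := (1 : ℂ)) ?_ one_ne_zero
    rw [(by simp : (1 : ℂ) = Real.exp (-0))]
    exact (Complex.continuous_ofReal.comp
      (Real.continuous_exp.comp continuous_neg)).continuousWithinAt

lemma aux_int (c : ℝ) (hc : 0 < c) (lam : ℝ) (hl : 0 < lam) :
    IntegrableOn (fun t : ℝ => t⁻¹ * Real.exp (-lam * t)) (Set.Ioi c) := by
  refine Integrable.mono' ((exp_neg_integrableOn_Ioi c hl).const_mul c⁻¹) ?_ ?_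
  · exact (measurable_inv.mul (by fun_prop)).aestronglyMeasurable
  · filter_upwards [ae_restrict_mem measurableSet_Ioi] with t ht
    have ht' : c < t := ht
    have : 0 < t := hc.trans ht'
    rw [Real.norm_of_nonneg (by positivity)]
    gcongr

lemma aux_parts (lam : ℝ) (hl : 0 < lam) :
    ∫ t in Set.Ioi (1:ℝ), t⁻¹ * Real.exp (-lam * t)
      = -(Real.log lam * Real.exp (-lam)) +
        ∫ t in Set.Ioi lam, Real.log t * Real.exp (-t) := by
  have hsub : ∫ t in Set.Ioi (1:ℝ), t⁻¹ * Real.exp (-lam * t)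
      = ∫ t in Set.Ioi lam, t⁻¹ * Real.exp (-t) := by
    have := integral_comp_mul_left_Ioi' (fun t : ℝ => t⁻¹ * Real.exp (-t)) 1 hl
    rw [mul_one] at this
    rw [← this, smul_eq_mul, ← integral_const_mul]
    refine integral_congr_ae (Eventually.of_forall fun t => ?_)
    simp only [mul_inv, neg_mul]
    field_simp
  have hint : IntegrableOn (fun t : ℝ => t⁻¹ * Real.exp (-t)) (Set.Ioi lam) := by
    simpa using aux_int lam hl 1 one_pos
  have hlog := aux_log_exp.1.mono_set (Set.Ioi_subset_Ioi hl.le)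
  have h := integral_Ioi_mul_deriv_eq_deriv_mul (a := lam) (u := Real.log)
    (u' := fun t => t⁻¹) (v := fun t => Real.exp (-t)) (v' := fun t => - Real.exp (-t))
    (a' := Real.log lam * Real.exp (-lam)) (b' := 0)
    (fun x hx => Real.hasDerivAt_log (hl.trans hx).ne')
    (fun x _ => by simpa using (hasDerivAt_neg x).exp)
    (by simpa [Pi.mul_def] using hlog.neg) hint ?_ ?_
  · rw [hsub]
    simp only [mul_neg, integral_neg] at h
    linarith
  · refine Tendsto.mono_left (ContinuousAt.tendsto (f := fun t => Real.log t * Real.exp (-t)) ?_)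
      nhdsWithin_le_nhds
    exact (Real.continuousAt_log hl.ne').mul (by fun_prop)
  · have h1 : Tendsto (fun t : ℝ => t * Real.exp (-t)) atTop (nhds 0) := by
      simpa using Real.tendsto_pow_mul_exp_neg_atTop_nhds_zero 1
    refine squeeze_zero' ?_ ?_ h1
    · filter_upwards [eventually_ge_atTop 1] with t ht
      exact mul_nonneg (Real.log_nonneg ht) (Real.exp_pos _).le
    · filter_upwards [eventually_ge_atTop 1] with t ht
      exact mul_le_mul_of_nonneg_right (Real.log_le_self (by linarith)) (Real.exp_pos _).le

lemma aux_lim : Tendsto (fun lam : ℝ =>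
      (∫ t in Set.Ioi (1:ℝ), t⁻¹ * Real.exp (-lam * t)) + Real.log lam)
      (nhdsWithin 0 (Set.Ioi 0)) (nhds (-Real.eulerMascheroniConstant)) := by
  have h1 : Tendsto (fun lam : ℝ => ∫ t in Set.Ioi lam, Real.log t * Real.exp (-t))
      (nhdsWithin 0 (Set.Ioi 0)) (nhds (-Real.eulerMascheroniConstant)) := by
    rw [← aux_log_exp.2]
    simp_rw [← integral_indicator (measurableSet_Ioi : MeasurableSet (Set.Ioi (_ : ℝ)))]
    refine tendsto_integral_filter_of_dominated_convergence
      (fun t => ‖(Set.Ioi (0:ℝ)).indicator (fun t : ℝ => Real.log t * Real.exp (-t)) t‖)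
      ?_ ?_ ?_ ?_
    · exact Eventually.of_forall fun l => ((Measurable.indicator
        (Real.measurable_log.mul (by fun_prop)) measurableSet_Ioi)).aestronglyMeasurable
    · filter_upwards [self_mem_nhdsWithin] with l hl
      exact Eventually.of_forall fun t =>
        norm_indicator_le_of_subset (Set.Ioi_subset_Ioi (le_of_lt hl)) _ _
    · exact ((integrable_indicator_iff measurableSet_Ioi).2 aux_log_exp.1).norm
    · refine Eventually.of_forall fun t => ?_
      refine tendsto_const_nhds.congr' ?_
      by_cases ht : 0 < t
      · filter_upwards [nhdsWithin_le_nhds (Iio_mem_nhds ht)] with l hl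
        simp [Set.indicator, ht, show l < t from hl]
      · filter_upwards [self_mem_nhdsWithin] with l hl
        have : ¬ l < t := fun h => ht (lt_trans hl h)
        simp [Set.indicator, ht, this]
  have h2 : Tendsto (fun lam : ℝ => Real.log lam * (1 - Real.exp (-lam)))
      (nhdsWithin 0 (Set.Ioi 0)) (nhds 0) := by
    have h3 : Tendsto (fun x : ℝ => Real.log x * x) (nhdsWithin 0 (Set.Ioi 0)) (nhds 0) := by
      simpa using tendsto_log_mul_rpow_nhdsGT_zero one_pos
    refine squeeze_zero_norm' ?_ (by simpa using h3.norm)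
    filter_upwards [self_mem_nhdsWithin] with l hl
    have hl : 0 < l := hl
    have a1 : Real.exp (-l) ≤ 1 := Real.exp_le_one_iff.2 (by linarith)
    have a2 := Real.add_one_le_exp (-l)
    rw [norm_mul, Real.norm_eq_abs, Real.norm_eq_abs, abs_of_nonneg (a := 1 - _) (by linarith),
      abs_of_pos hl]
    gcongr
    linarith
  have h3 := h2.add h1
  rw [zero_add] at h3
  refine h3.congr' ?_
  filter_upwards [self_mem_nhdsWithin] with l hl
  rw [aux_parts l hl]
  ring

/-- The core analytic content of Proposition 2.1 of the paper: if
`f : [1,∞) → ℝ` is locally integrable and `|f(t) − b₀| ≤ C t^{−ρ}` for `t ≥ 1`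
(with `ρ > 0`, `C > 0`), then
`lim_{λ→0⁺} ( ∫₁^∞ t⁻¹ e^{−λt} f(t) dt + b₀ log λ )
  = ∫₁^∞ t⁻¹ (f(t) − b₀) dt − b₀ γ`,
where `γ` is the Euler–Mascheroni constant. -/
theorem relative_zeta_large_time_limit
    (b₀ ρ C : ℝ) (hρ : 0 < ρ) (hC : 0 < C) (f : ℝ → ℝ)
    (hloc : LocallyIntegrableOn f (Set.Ici 1))
    (hbound : ∀ t : ℝ, 1 ≤ t → |f t - b₀| ≤ C * t ^ (-ρ)) :
    Tendsto
      (fun lam : ℝ =>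
        (∫ t in Set.Ioi (1 : ℝ), t⁻¹ * Real.exp (-lam * t) * f t) + b₀ * Real.log lam)
      (nhdsWithin 0 (Set.Ioi 0))
      (nhds ((∫ t in Set.Ioi (1 : ℝ), t⁻¹ * (f t - b₀))
        - b₀ * Real.eulerMascheroniConstant)) := by
  have hm : AEStronglyMeasurable f (volume.restrict (Set.Ioi 1)) :=
    hloc.aestronglyMeasurable.mono_measure
      (Measure.restrict_mono Set.Ioi_subset_Ici_self le_rfl)
  have hbd : IntegrableOn (fun t : ℝ => C * t ^ (-1 - ρ)) (Set.Ioi 1) :=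
    (integrableOn_Ioi_rpow_of_lt (by linarith) one_pos).const_mul C
  have hme : ∀ l : ℝ, AEStronglyMeasurable (fun t => t⁻¹ * Real.exp (-l * t) * (f t - b₀))
      (volume.restrict (Set.Ioi 1)) := fun l =>
    (measurable_inv.mul (by fun_prop)).aestronglyMeasurable.mul
      (hm.sub aestronglyMeasurable_const)
  have hle : ∀ l : ℝ, 0 < l → ∀ᵐ t ∂(volume.restrict (Set.Ioi (1:ℝ))),
      ‖t⁻¹ * Real.exp (-l * t) * (f t - b₀)‖ ≤ C * t ^ (-1 - ρ) := by
    intro l hl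
    filter_upwards [ae_restrict_mem measurableSet_Ioi] with t ht
    have ht1 : 1 < t := ht
    have ht0 : 0 < t := one_pos.trans ht1
    have he : Real.exp (-l * t) ≤ 1 := Real.exp_le_one_iff.2 (by nlinarith)
    rw [norm_mul, Real.norm_of_nonneg (by positivity), Real.norm_eq_abs]
    calc t⁻¹ * Real.exp (-l * t) * |f t - b₀| ≤ t⁻¹ * 1 * (C * t ^ (-ρ)) := by
          gcongr
          exact hbound t ht1.le
      _ = C * t ^ (-1 - ρ) := by
          rw [sub_eq_add_neg, Real.rpow_add ht0, Real.rpow_neg_one]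
          ring
  have hA : Tendsto (fun l : ℝ => ∫ t in Set.Ioi (1:ℝ), t⁻¹ * Real.exp (-l * t) * (f t - b₀))
      (nhdsWithin 0 (Set.Ioi 0)) (nhds (∫ t in Set.Ioi (1:ℝ), t⁻¹ * (f t - b₀))) := by
    refine tendsto_integral_filter_of_dominated_convergence (fun t : ℝ => C * t ^ (-1 - ρ))
      (Eventually.of_forall hme) ?_ hbd ?_
    · filter_upwards [self_mem_nhdsWithin] with l hl using hle l hl
    · refine Eventually.of_forall fun t => ?_
      have hc : Continuous (fun l : ℝ => t⁻¹ * Real.exp (-l * t) * (f t - b₀)) := by fun_prop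
      have := hc.tendsto 0
      simp only [neg_zero, zero_mul, Real.exp_zero, mul_one] at this
      exact this.mono_left nhdsWithin_le_nhds
  have hfin := hA.add (aux_lim.const_mul b₀)
  rw [mul_neg, ← sub_eq_add_neg] at hfin
  refine hfin.congr' ?_
  filter_upwards [self_mem_nhdsWithin] with l hl
  have i1 : IntegrableOn (fun t => t⁻¹ * Real.exp (-l * t) * (f t - b₀)) (Set.Ioi 1) :=
    Integrable.mono' hbd (hme l) (hle l hl)
  have i2 := (aux_int 1 one_pos l hl).const_mul b₀
  have : ∫ t in Set.Ioi (1:ℝ), t⁻¹ * Real.exp (-l * t) * f t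
      = (∫ t in Set.Ioi (1:ℝ), t⁻¹ * Real.exp (-l * t) * (f t - b₀))
        + b₀ * ∫ t in Set.Ioi (1:ℝ), t⁻¹ * Real.exp (-l * t) := by
    rw [← integral_const_mul, ← integral_add i1 i2]
    refine integral_congr_ae (Eventually.of_forall fun t => ?_)
    ring
  rw [this]
  ring
end

section
/- For all x₀ > 0 and all real σ₀ ≤ σ₁ there exists a constant C > 0 such that for every s ∈ ℂ with σ₀ ≤ Re s ≤ σ₁ and every real x ≥ x₀, |∫₀^∞ e^{−x(t + 1/t)} t^{s−1} dt| ≤ C e^{−2x}. -/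
open MeasureTheory Real

lemma besselK_aux (c a : ℝ) (hc : 0 < c) :
    IntegrableOn (fun t : ℝ => Real.exp (-c * (t + 1 / t)) * t ^ a) (Set.Ioi 0) := by
  obtain ⟨n, hn⟩ := exists_nat_gt (-1 - a)
  have h1 : IntegrableOn (fun t : ℝ => t ^ (a + n) * Real.exp (-c * t ^ (1 : ℝ))) (Set.Ioi 0) :=
    integrableOn_rpow_mul_exp_neg_mul_rpow (by linarith) one_pos hc
  have h2 := h1.const_mul ((n.factorial : ℝ) / c ^ n)
  refine Integrable.mono' h2 ?_ ?_
  · apply Measurable.aestronglyMeasurable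
    fun_prop
  · refine (ae_restrict_iff' measurableSet_Ioi).2 (Filter.Eventually.of_forall fun t ht => ?_)
    have ht : 0 < t := ht
    rw [Real.norm_of_nonneg (by positivity), Real.rpow_one, Real.rpow_add ht, Real.rpow_natCast]
    have h3 := Real.pow_div_factorial_le_exp (c / t) (by positivity) n
    have h4 : Real.exp (-(c / t)) ≤ (n.factorial : ℝ) / c ^ n * t ^ n := by
      rw [Real.exp_neg]
      refine (inv_anti₀ (by positivity) h3).trans (le_of_eq ?_)
      rw [div_pow]
      field_simp
    have h5 : Real.exp (-c * (t + 1 / t)) = Real.exp (-(c / t)) * Real.exp (-c * t) := by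
      rw [← Real.exp_add]; congr 1; ring
    rw [h5]
    calc Real.exp (-(c / t)) * Real.exp (-c * t) * t ^ a
        ≤ ((n.factorial : ℝ) / c ^ n * t ^ n) * Real.exp (-c * t) * t ^ a := by gcongr
      _ = _ := by ring

/-- Estimate (5.6) of the paper: for all `x₀ > 0` and reals `σ₀ ≤ σ₁` there exists
`C > 0` such that `|K_s(x)| = |∫₀^∞ e^{−x(t + 1/t)} t^{s−1} dt| ≤ C e^{−2x}`
for every `s ∈ ℂ` with `σ₀ ≤ Re s ≤ σ₁` and every `x ≥ x₀`. -/
theorem besselK_uniform_bound (x₀ : ℝ) (hx₀ : 0 < x₀) (σ₀ σ₁ : ℝ) (hσ : σ₀ ≤ σ₁) :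
    ∃ C > (0 : ℝ), ∀ s : ℂ, σ₀ ≤ s.re → s.re ≤ σ₁ → ∀ x : ℝ, x₀ ≤ x →
      ‖∫ t in Set.Ioi (0 : ℝ), (Real.exp (-x * (t + 1 / t)) : ℂ) * (t : ℂ) ^ (s - 1)‖ ≤
        C * Real.exp (-2 * x) := by
  set g : ℝ → ℝ := fun t => Real.exp (2 * x₀) *
    (Real.exp (-x₀ * (t + 1 / t)) * t ^ (σ₀ - 1) + Real.exp (-x₀ * (t + 1 / t)) * t ^ (σ₁ - 1))
    with hg
  have hgi : Integrable g (volume.restrict (Set.Ioi 0)) :=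
    ((besselK_aux x₀ (σ₀ - 1) hx₀).add (besselK_aux x₀ (σ₁ - 1) hx₀)).const_mul _
  have hg0 : 0 ≤ ∫ t in Set.Ioi (0 : ℝ), g t := by
    refine setIntegral_nonneg measurableSet_Ioi fun t ht => ?_
    have ht : 0 < t := ht
    positivity
  refine ⟨(∫ t in Set.Ioi (0 : ℝ), g t) + 1, by linarith, fun s h0 h1 x hx => ?_⟩
  have key := norm_integral_le_of_norm_le (hgi.mul_const (Real.exp (-2 * x)))
    (f := fun t : ℝ => (Real.exp (-x * (t + 1 / t)) : ℂ) * (t : ℂ) ^ (s - 1)) (by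
      refine (ae_restrict_iff' measurableSet_Ioi).2 (Filter.Eventually.of_forall fun t ht => ?_)
      have ht : 0 < t := ht
      rw [norm_mul, Complex.norm_cpow_eq_rpow_re_of_pos ht, Complex.norm_real,
        Real.norm_of_nonneg (Real.exp_pos _).le, Complex.sub_re, Complex.one_re]
      have h2 : 2 ≤ t + 1 / t := by
        have : t + 1 / t - 2 = (t - 1) ^ 2 / t := by field_simp; ring
        have : 0 ≤ (t - 1) ^ 2 / t := by positivity
        linarith
      have h3 : Real.exp (-x * (t + 1 / t)) ≤
          Real.exp (2 * x₀) * Real.exp (-x₀ * (t + 1 / t)) * Real.exp (-2 * x) := by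
        rw [← Real.exp_add, ← Real.exp_add]
        apply Real.exp_le_exp.2
        nlinarith [mul_nonneg (sub_nonneg.2 hx) (sub_nonneg.2 h2)]
      have h4 : t ^ (s.re - 1) ≤ t ^ (σ₀ - 1) + t ^ (σ₁ - 1) := by
        have p0 : 0 ≤ t ^ (σ₀ - 1) := by positivity
        have p1 : 0 ≤ t ^ (σ₁ - 1) := by positivity
        rcases le_total t 1 with h | h
        · have := Real.rpow_le_rpow_of_exponent_ge ht h (sub_le_sub_right h0 1)
          linarith
        · have := Real.rpow_le_rpow_of_exponent_le h (sub_le_sub_right h1 1)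
          linarith
      calc _ ≤ (Real.exp (2 * x₀) * Real.exp (-x₀ * (t + 1 / t)) * Real.exp (-2 * x)) *
            (t ^ (σ₀ - 1) + t ^ (σ₁ - 1)) := by gcongr
        _ = _ := by simp only [hg]; ring)
  rw [integral_mul_const] at key
  refine key.trans ?_
  gcongr
  linarith
end

section
/- The function F(s) = (Γ(s − 1/2)/(√π · Γ(s))) · 2 (2π)^{1−2s} ζ(2s − 1) extends holomorphically across s = 0 with F(0) = 0, and its derivative at s = 0 equals 2π/3. -/
open Real Complex Filter

lemma aux_Gamma_neg_half : Complex.Gamma (-1 / 2) = -2 * (Real.sqrt π : ℂ) := by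
  have h := Complex.Gamma_add_one (-1 / 2) (by norm_num)
  have h2 : Complex.Gamma (1 / 2) = (Real.sqrt π : ℂ) := by
    rw [← Real.Gamma_one_half_eq, ← Complex.Gamma_ofReal]
    norm_num
  rw [show (-1 / 2 + 1 : ℂ) = 1 / 2 by norm_num, h2] at h
  rw [h]; ring

lemma aux_zeta_neg_one : riemannZeta (-1) = -1 / 12 := by
  have h := riemannZeta_neg_nat_eq_bernoulli' 1
  norm_num [bernoulli'_two] at h
  rw [h]; norm_num

lemma aux_inv_Gamma_analytic (z : ℂ) : AnalyticAt ℂ (fun s : ℂ => (Complex.Gamma s)⁻¹) z :=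
  Complex.differentiable_one_div_Gamma.analyticAt z

lemma aux_zeta_analytic : AnalyticAt ℂ riemannZeta (-1) := by
  have h : DifferentiableOn ℂ riemannZeta {1}ᶜ := fun s hs =>
    (differentiableAt_riemannZeta hs).differentiableWithinAt
  exact h.analyticAt (isOpen_compl_singleton.mem_nhds (by
    simp only [Set.mem_compl_iff, Set.mem_singleton_iff]; norm_num))

/-- The function `F(s) = (Γ(s − 1/2)/(√π Γ(s))) · 2 (2π)^{1−2s} ζ(2s − 1)`
(the function `ξ_Y` of the paper for the circle `Y = ℝ/ℤ`) extends
holomorphically across `s = 0`, with `F(0) = 0` and `F′(0) = 2π/3`. -/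
theorem xi_circle_deriv_at_zero :
    ∃ F : ℂ → ℂ, AnalyticAt ℂ F 0 ∧
      (∀ᶠ s in nhdsWithin (0 : ℂ) {0}ᶜ,
        F s = Complex.Gamma (s - 1 / 2) / ((Real.sqrt π : ℂ) * Complex.Gamma s) *
          (2 * ((2 * π : ℝ) : ℂ) ^ (1 - 2 * s) * riemannZeta (2 * s - 1))) ∧
      F 0 = 0 ∧ HasDerivAt F ((2 * π / 3 : ℝ) : ℂ) 0 := by
  have hpi : (Real.sqrt π : ℂ) ≠ 0 := by
    exact_mod_cast (Real.sqrt_pos.mpr Real.pi_pos).ne'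
  have h2pi : ((2 * π : ℝ) : ℂ) ≠ 0 := by
    exact_mod_cast (by positivity : (2 * π : ℝ) ≠ 0)
  let H : ℂ → ℂ := fun s => ((Complex.Gamma (s - 1 / 2))⁻¹)⁻¹ * (Real.sqrt π : ℂ)⁻¹ *
    (Complex.Gamma (s + 1))⁻¹ *
    (2 * ((2 * π : ℝ) : ℂ) ^ (1 - 2 * s) * riemannZeta (2 * s - 1))
  have hG0 : Complex.Gamma ((0 : ℂ) - 1 / 2) = -2 * (Real.sqrt π : ℂ) := by
    rw [← aux_Gamma_neg_half]; norm_num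
  have hH : AnalyticAt ℂ H 0 := by
    have h1 : AnalyticAt ℂ (fun s : ℂ => (Complex.Gamma (s - 1 / 2))⁻¹) 0 :=
      (aux_inv_Gamma_analytic ((0 : ℂ) - 1 / 2)).fun_comp (f := fun s : ℂ => s - 1 / 2)
        (by fun_prop)
    have h2 : AnalyticAt ℂ (fun s : ℂ => (Complex.Gamma (s + 1))⁻¹) 0 :=
      (aux_inv_Gamma_analytic ((0 : ℂ) + 1)).fun_comp (f := fun s : ℂ => s + 1) (by fun_prop)
    have h3 : AnalyticAt ℂ (fun s : ℂ => riemannZeta (2 * s - 1)) 0 := by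
      refine AnalyticAt.fun_comp (g := riemannZeta) (f := fun s : ℂ => 2 * s - 1) ?_ (by fun_prop)
      simpa using aux_zeta_analytic
    have h4 : AnalyticAt ℂ (fun s : ℂ => ((2 * π : ℝ) : ℂ) ^ (1 - 2 * s)) 0 := by
      have hd : Differentiable ℂ (fun s : ℂ => ((2 * π : ℝ) : ℂ) ^ (1 - 2 * s)) := fun s =>
        DifferentiableAt.const_cpow (by fun_prop) (Or.inl h2pi)
      exact hd.analyticAt 0
    have h1' := h1.inv (by
      rw [hG0]
      exact inv_ne_zero (mul_ne_zero (by norm_num) hpi))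
    exact ((h1'.mul analyticAt_const).mul h2).mul ((analyticAt_const.mul h4).mul h3)
  have hH0 : H 0 = ((2 * π / 3 : ℝ) : ℂ) := by
    simp only [H]
    rw [hG0]
    simp only [zero_add, mul_zero, zero_sub, sub_zero, Complex.Gamma_one, Complex.cpow_one,
      aux_zeta_neg_one, inv_inv]
    push_cast
    field_simp
    norm_num
  refine ⟨fun s => s * H s, analyticAt_id.mul hH, ?_, by simp, ?_⟩
  · filter_upwards [] with s
    simp only [H]
    have h := Complex.one_div_Gamma_eq_self_mul_one_div_Gamma_add_one s
    rw [inv_inv, div_eq_mul_inv (Complex.Gamma (s - 1 / 2)), mul_inv, h]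
    ring
  · have h := (hasDerivAt_id (0 : ℂ)).mul hH.differentiableAt.hasDerivAt
    rw [← hH0]
    simpa using! h
end
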